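/- arXiv:1210.1559 — 6 statements merged into one kernel-verified Lean document; each statement's English description precedes it below -/
import Mathlib

section
/- For every σ ∈ Σ₊ and every a ∈ O_K one has ρ_Q(σ(a)) = γ₀(σ|_{K₀})(ρ_{P₊}(a)), and for every σ ∈ Σ₋ and every a ∈ O_K one has ρ_Q(σ(a)) = γ₀(σ|_{K₀})(ρ_{P₋}(a)) (equalities in k_Q, where k_{P₀} is viewed as a subfield of k_Q). In particular there are unique maps γ_± : Σ_± → Gal(k_{P₀}/F_p) satisfying ρ_Q(σ(a)) = γ_±(σ)(ρ_{P_±}(a)) for all σ ∈ Σ_± and all a ∈ O_K, namely γ_±(σ) = γ₀(σ|_{K₀}). -/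
set_option synthInstance.maxHeartbeats 1000000
set_option maxHeartbeats 1000000

open NumberField

namespace Pap2

variable (K₀ K L : Type*) [Field K₀] [NumberField K₀] [Field K] [NumberField K]
  [Field L] [NumberField L] [Algebra K₀ K] [Algebra K L] [Algebra K₀ L]
  [IsScalarTower K₀ K L] (ι : L →+* ℂ)
  (P₀ : Ideal (𝓞 K₀)) (Q : Ideal (𝓞 L))

/-- The characterizing property of `γ₀ : Σ₀ → Gal(k_{P₀}/𝔽_p)` (from Lemma 3.1):
`ρ_Q(σ(a)) = γ₀(σ)(ρ_{P₀}(a))` for all `σ ∈ Σ₀`, `a ∈ O_{K₀}`. -/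
def CharProp (hQ0 : Ideal.comap (RingOfIntegers.mapRingHom (algebraMap K₀ L)) Q = P₀)
    (γ₀ : (K₀ →+* ℂ) → RingAut (𝓞 K₀ ⧸ P₀)) : Prop :=
  ∀ (σ : K₀ →+* ℂ) (τ : K₀ →+* L), ι.comp τ = σ →
    ∀ a : 𝓞 K₀,
      Ideal.Quotient.mk Q (RingOfIntegers.mapRingHom τ a)
        = Ideal.quotientMap Q (RingOfIntegers.mapRingHom (algebraMap K₀ L)) hQ0.ge
            (γ₀ σ (Ideal.Quotient.mk P₀ a))

/-- The embedding `k_{P₀} ↪ k_Q` induced by `O_{K₀} ⊆ O_L`. -/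
def emb (hQ0 : Ideal.comap (RingOfIntegers.mapRingHom (algebraMap K₀ L)) Q = P₀) :
    (𝓞 K₀ ⧸ P₀) →+* (𝓞 L ⧸ Q) :=
  Ideal.quotientMap Q (RingOfIntegers.mapRingHom (algebraMap K₀ L)) hQ0.ge

/-- The natural map `k_{P₀} → O_K/P` for a prime `P` of `O_K` lying over `P₀`. -/
def qmap (P : Ideal (𝓞 K))
    (h : Ideal.comap (RingOfIntegers.mapRingHom (algebraMap K₀ K)) P = P₀) :
    (𝓞 K₀ ⧸ P₀) →+* (𝓞 K ⧸ P) :=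
  Ideal.quotientMap P (RingOfIntegers.mapRingHom (algebraMap K₀ K)) h.ge

/-- Restriction `G = Gal(L/ℚ) → Σ`, `g ↦ ι ∘ g|_K`. -/
def alpha (g : L ≃ₐ[ℚ] L) : K →+* ℂ := ι.comp ((g : L →+* L).comp (algebraMap K L))

/-- The subgroup `H = Gal(L/K)` of `G`. -/
def HH : Set (L ≃ₐ[ℚ] L) := {g | ∀ x : K, g (algebraMap K L x) = algebraMap K L x}

/-- The decomposition group `G_Q ⊆ G` of `Q`. -/
def GQ : Set (L ≃ₐ[ℚ] L) :=
  {g | Ideal.comap (RingOfIntegers.mapRingHom (g : L →+* L)) Q = Q}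

/-- `Σ₊ = α(G_Q·H)`. -/
def SigPlus : Set (K →+* ℂ) :=
  {σ | ∃ d ∈ GQ L Q, ∃ h ∈ HH K L, σ = alpha K L ι (d * h)}

/-- `Σ₋ = α(G_Q·τ_∗·H)`. -/
def SigMinus (τstar : L ≃ₐ[ℚ] L) : Set (K →+* ℂ) :=
  {σ | ∃ d ∈ GQ L Q, ∃ h ∈ HH K L, σ = alpha K L ι (d * τstar * h)}

end Pap2

open Pap2 in
theorem Pap2.key {K₀ K L : Type*} [Field K₀] [NumberField K₀] [Field K] [NumberField K]
    [Field L] [NumberField L] [Algebra K₀ K] [Algebra K L] [Algebra K₀ L]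
    [IsScalarTower K₀ K L] (ι : L →+* ℂ)
    (P₀ : Ideal (𝓞 K₀)) (Q : Ideal (𝓞 L))
    (hQ0 : Ideal.comap (RingOfIntegers.mapRingHom (algebraMap K₀ L)) Q = P₀)
    (γ₀ : (K₀ →+* ℂ) → RingAut (𝓞 K₀ ⧸ P₀))
    (hγ₀ : CharProp K₀ L ι P₀ Q hQ0 γ₀) (P : Ideal (𝓞 K))
    (hc : Ideal.comap (RingOfIntegers.mapRingHom (algebraMap K₀ K)) P = P₀)
    (hb : Function.Bijective (qmap K₀ K P₀ P hc)) (τ : K →+* L)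
    (hP : ∀ a ∈ P, RingOfIntegers.mapRingHom τ a ∈ Q) (a : 𝓞 K) :
    Ideal.Quotient.mk Q (RingOfIntegers.mapRingHom τ a)
          = emb K₀ L P₀ Q hQ0
              (γ₀ ((ι.comp τ).comp (algebraMap K₀ K))
                ((RingEquiv.ofBijective _ hb).symm (Ideal.Quotient.mk P a))) := by
  obtain ⟨x, hx⟩ := hb.2 (Ideal.Quotient.mk P a)
  obtain ⟨b, rfl⟩ := Ideal.Quotient.mk_surjective x
  have h1 : (RingEquiv.ofBijective _ hb).symm (Ideal.Quotient.mk P a) = Ideal.Quotient.mk P₀ b := by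
    rw [RingEquiv.symm_apply_eq]
    exact hx.symm
  rw [h1]
  have h2 := hγ₀ _ (τ.comp (algebraMap K₀ K)) rfl b
  rw [RingHom.comp_assoc]
  refine Eq.trans ?_ h2
  have h3 : Ideal.Quotient.mk P (RingOfIntegers.mapRingHom (algebraMap K₀ K) b)
      = Ideal.Quotient.mk P a := hx
  have h4 := hP _ (Ideal.Quotient.eq.1 h3.symm)
  rw [map_sub] at h4
  exact Ideal.Quotient.eq.2 h4

open Pap2 in
theorem Pap2.uniq {K₀ K L : Type*} [Field K₀] [NumberField K₀] [Field K] [NumberField K]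
    [Field L] [NumberField L] [Algebra K₀ K] [Algebra K L] [Algebra K₀ L]
    [IsScalarTower K₀ K L] (ι : L →+* ℂ)
    (P₀ : Ideal (𝓞 K₀)) (Q : Ideal (𝓞 L))
    (hQ0 : Ideal.comap (RingOfIntegers.mapRingHom (algebraMap K₀ L)) Q = P₀)
    (γ₀ : (K₀ →+* ℂ) → RingAut (𝓞 K₀ ⧸ P₀)) (P : Ideal (𝓞 K))
    (hc : Ideal.comap (RingOfIntegers.mapRingHom (algebraMap K₀ K)) P = P₀)
    (hb : Function.Bijective (qmap K₀ K P₀ P hc)) (S : Set (K →+* ℂ))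
    (hS : ∀ σ ∈ S, ∃ τ : K →+* L, ι.comp τ = σ)
    (h : ∀ σ ∈ S, ∀ τ : K →+* L, ι.comp τ = σ →
      ∀ a : 𝓞 K,
        Ideal.Quotient.mk Q (RingOfIntegers.mapRingHom τ a)
          = emb K₀ L P₀ Q hQ0
              (γ₀ (σ.comp (algebraMap K₀ K))
                ((RingEquiv.ofBijective _ hb).symm (Ideal.Quotient.mk P a)))) :
    ∃! γp : {σ : K →+* ℂ // σ ∈ S} → RingAut (𝓞 K₀ ⧸ P₀),
      ∀ (σ : {σ : K →+* ℂ // σ ∈ S}) (τ : K →+* L), ι.comp τ = σ.1 →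
        ∀ a : 𝓞 K,
          Ideal.Quotient.mk Q (RingOfIntegers.mapRingHom τ a)
            = emb K₀ L P₀ Q hQ0
                (γp σ ((RingEquiv.ofBijective _ hb).symm (Ideal.Quotient.mk P a))) := by
  refine ⟨fun σ => γ₀ (σ.1.comp (algebraMap K₀ K)), fun σ => h σ.1 σ.2, ?_⟩
  intro γ hγ
  funext σ
  obtain ⟨τ, hτ⟩ := hS σ.1 σ.2
  refine RingEquiv.ext fun x => ?_
  obtain ⟨a, ha⟩ := Ideal.Quotient.mk_surjective ((RingEquiv.ofBijective _ hb) x)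
  have hx : (RingEquiv.ofBijective _ hb).symm (Ideal.Quotient.mk P a) = x := by
    rw [ha, RingEquiv.symm_apply_apply]
  have hinj : Function.Injective (emb K₀ L P₀ Q hQ0) :=
    Ideal.quotientMap_injective' hQ0.le
  apply hinj
  have e1 := hγ σ τ hτ a
  have e2 := h σ.1 σ.2 τ hτ a
  rw [hx] at e1 e2
  exact e1.symm.trans e2

open Pap2 in
theorem Pap2.star_star {K₀ K : Type*} [Field K₀] [Field K] [Algebra K₀ K]
    (star : K ≃ₐ[K₀] K) (hstar : star ≠ AlgEquiv.refl) (hquad : Module.finrank K₀ K = 2)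
    (x : K) : star (star x) = x := by
  have : FiniteDimensional K₀ K := Module.finite_of_finrank_eq_succ hquad
  have h1 : Fintype.card (K ≃ₐ[K₀] K) ≤ 2 := hquad ▸ AlgEquiv.card_le
  have h2 : 1 < Fintype.card (K ≃ₐ[K₀] K) := Fintype.one_lt_card_iff.2 ⟨_, _, hstar⟩
  have h3 : star ^ 2 = 1 := by
    rw [show 2 = Fintype.card (K ≃ₐ[K₀] K) by omega]
    exact pow_card_eq_one
  rw [pow_two] at h3
  exact DFunLike.congr_fun h3 x

open Pap2 in
/-- For `σ ∈ Σ_±` and `a ∈ O_K` one has `ρ_Q(σ(a)) = γ₀(σ|_{K₀})(ρ_{P_±}(a))` in `k_Q`; in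
particular there are unique maps `γ_± : Σ_± → Gal(k_{P₀}/𝔽_p)` with
`ρ_Q(σ(a)) = γ_±(σ)(ρ_{P_±}(a))`, namely `γ_±(σ) = γ₀(σ|_{K₀})`. Here the residue fields of
`P_±` are identified with `k_{P₀}` via the isomorphisms induced by `O_{K₀} ⊆ O_K`. -/
theorem stmt2 (p : ℕ) (hp : p.Prime)
    (K₀ K L : Type*) [Field K₀] [NumberField K₀] [Field K] [NumberField K]
    [Field L] [NumberField L] [Algebra K₀ K] [Algebra K L] [Algebra K₀ L]
    [IsScalarTower K₀ K L] [IsGalois ℚ L]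
    (star : K ≃ₐ[K₀] K) (hstar : star ≠ AlgEquiv.refl) (hquad : Module.finrank K₀ K = 2)
    (ι : L →+* ℂ)
    (hfull : ∀ σ : K₀ →+* ℂ, ∃ τ : K₀ →+* L, ι.comp τ = σ)
    (P₀ : Ideal (𝓞 K₀)) [P₀.IsMaximal] (e₀ : ℕ) (he₀ : 1 ≤ e₀)
    (hP₀ : Ideal.span {(p : 𝓞 K₀)} = P₀ ^ e₀)
    (Pp Pm : Ideal (𝓞 K)) [Pp.IsMaximal] [Pm.IsMaximal] (hPpm : Pp ≠ Pm)
    (hsplit : Ideal.map (RingOfIntegers.mapRingHom (algebraMap K₀ K)) P₀ = Pp * Pm)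
    (hstarP : Ideal.map (RingOfIntegers.mapRingHom (star : K →+* K)) Pp = Pm)
    (Q : Ideal (𝓞 L)) [Q.IsMaximal]
    (hQp : Ideal.comap (RingOfIntegers.mapRingHom (algebraMap K L)) Q = Pp)
    (hQ0 : Ideal.comap (RingOfIntegers.mapRingHom (algebraMap K₀ L)) Q = P₀)
    (hcp : Ideal.comap (RingOfIntegers.mapRingHom (algebraMap K₀ K)) Pp = P₀)
    (hcm : Ideal.comap (RingOfIntegers.mapRingHom (algebraMap K₀ K)) Pm = P₀)
    (hbp : Function.Bijective (qmap K₀ K P₀ Pp hcp))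
    (hbm : Function.Bijective (qmap K₀ K P₀ Pm hcm))
    (τstar : L ≃ₐ[ℚ] L) (hτ : ∀ x : K, τstar (algebraMap K L x) = algebraMap K L (star x))
    (γ₀ : (K₀ →+* ℂ) → RingAut (𝓞 K₀ ⧸ P₀))
    (hγ₀ : CharProp K₀ L ι P₀ Q hQ0 γ₀) :
    (∀ σ ∈ SigPlus K L ι Q, ∀ τ : K →+* L, ι.comp τ = σ →
      ∀ a : 𝓞 K,
        Ideal.Quotient.mk Q (RingOfIntegers.mapRingHom τ a)
          = emb K₀ L P₀ Q hQ0
              (γ₀ (σ.comp (algebraMap K₀ K))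
                ((RingEquiv.ofBijective _ hbp).symm (Ideal.Quotient.mk Pp a)))) ∧
    (∀ σ ∈ SigMinus K L ι Q τstar, ∀ τ : K →+* L, ι.comp τ = σ →
      ∀ a : 𝓞 K,
        Ideal.Quotient.mk Q (RingOfIntegers.mapRingHom τ a)
          = emb K₀ L P₀ Q hQ0
              (γ₀ (σ.comp (algebraMap K₀ K))
                ((RingEquiv.ofBijective _ hbm).symm (Ideal.Quotient.mk Pm a)))) ∧
    (∃! γp : {σ : K →+* ℂ // σ ∈ SigPlus K L ι Q} → RingAut (𝓞 K₀ ⧸ P₀),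
      ∀ (σ : {σ : K →+* ℂ // σ ∈ SigPlus K L ι Q}) (τ : K →+* L), ι.comp τ = σ.1 →
        ∀ a : 𝓞 K,
          Ideal.Quotient.mk Q (RingOfIntegers.mapRingHom τ a)
            = emb K₀ L P₀ Q hQ0
                (γp σ ((RingEquiv.ofBijective _ hbp).symm (Ideal.Quotient.mk Pp a)))) ∧
    (∃! γm : {σ : K →+* ℂ // σ ∈ SigMinus K L ι Q τstar} → RingAut (𝓞 K₀ ⧸ P₀),
      ∀ (σ : {σ : K →+* ℂ // σ ∈ SigMinus K L ι Q τstar}) (τ : K →+* L), ι.comp τ = σ.1 →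
        ∀ a : 𝓞 K,
          Ideal.Quotient.mk Q (RingOfIntegers.mapRingHom τ a)
            = emb K₀ L P₀ Q hQ0
                (γm σ ((RingEquiv.ofBijective _ hbm).symm (Ideal.Quotient.mk Pm a)))) := by
  have hGQ : ∀ d ∈ GQ L Q, ∀ x ∈ Q, RingOfIntegers.mapRingHom (d : L →+* L) x ∈ Q := by
    intro d hd x hx
    have hd' : Ideal.comap (RingOfIntegers.mapRingHom (d : L →+* L)) Q = Q := hd
    rw [← hd'] at hx
    exact hx
  have hιinj := ι.injective
  have A : ∀ σ ∈ SigPlus K L ι Q, ∀ τ : K →+* L, ι.comp τ = σ →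
      ∀ a ∈ Pp, RingOfIntegers.mapRingHom τ a ∈ Q := by
    rintro σ ⟨d, hd, h, hh, rfl⟩ τ hτ' a ha
    rw [← hQp] at ha
    have := hGQ d hd _ ha
    convert this using 1
    apply RingOfIntegers.ext
    apply hιinj
    refine (DFunLike.congr_fun hτ' (a : K)).trans ?_
    change ι (d (h (algebraMap K L a))) = ι (d (algebraMap K L a))
    rw [hh]
  have B : ∀ σ ∈ SigMinus K L ι Q τstar, ∀ τ : K →+* L, ι.comp τ = σ →
      ∀ a ∈ Pm, RingOfIntegers.mapRingHom τ a ∈ Q := by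
    rintro σ ⟨d, hd, h, hh, rfl⟩ τ hτ' a ha
    have hle : Pm ≤ Ideal.comap (RingOfIntegers.mapRingHom (star : K →+* K)) Pp := by
      rw [← hstarP, Ideal.map_le_iff_le_comap]
      intro x hx
      rw [Ideal.mem_comap, Ideal.mem_comap]
      convert hx using 1
      apply RingOfIntegers.ext
      exact star_star star hstar hquad x
    have ha' := hle ha
    rw [Ideal.mem_comap, ← hQp] at ha'
    have := hGQ d hd _ ha'
    convert this using 1
    apply RingOfIntegers.ext
    apply hιinj
    refine (DFunLike.congr_fun hτ' (a : K)).trans ?_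
    change ι (d (τstar (h (algebraMap K L a)))) = ι (d (algebraMap K L (star a)))
    rw [hh, hτ]
  have A' : ∀ σ ∈ SigPlus K L ι Q, ∀ τ : K →+* L, ι.comp τ = σ →
      ∀ a : 𝓞 K,
        Ideal.Quotient.mk Q (RingOfIntegers.mapRingHom τ a)
          = emb K₀ L P₀ Q hQ0
              (γ₀ (σ.comp (algebraMap K₀ K))
                ((RingEquiv.ofBijective _ hbp).symm (Ideal.Quotient.mk Pp a))) := by
    intro σ hσ τ h a
    have hA := A σ hσ τ h
    subst h
    exact key ι P₀ Q hQ0 γ₀ hγ₀ Pp hcp hbp τ hA a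
  have B' : ∀ σ ∈ SigMinus K L ι Q τstar, ∀ τ : K →+* L, ι.comp τ = σ →
      ∀ a : 𝓞 K,
        Ideal.Quotient.mk Q (RingOfIntegers.mapRingHom τ a)
          = emb K₀ L P₀ Q hQ0
              (γ₀ (σ.comp (algebraMap K₀ K))
                ((RingEquiv.ofBijective _ hbm).symm (Ideal.Quotient.mk Pm a))) := by
    intro σ hσ τ h a
    have hB := B σ hσ τ h
    subst h
    exact key ι P₀ Q hQ0 γ₀ hγ₀ Pm hcm hbm τ hB a
  refine ⟨A', B', uniq ι P₀ Q hQ0 γ₀ Pp hcp hbp _ ?_ A', uniq ι P₀ Q hQ0 γ₀ Pm hcm hbm _ ?_ B'⟩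
  · rintro σ ⟨d, hd, h, hh, rfl⟩
    exact ⟨_, rfl⟩
  · rintro σ ⟨d, hd, h, hh, rfl⟩
    exact ⟨_, rfl⟩
end

section
/- For every i ∈ {1,…,n} the following are equivalent: (1) there exists ξ ∈ ℤ/f with ν_ξ(i) = 0; (2) ν_ξ(i) = 0 for all ξ ∈ ℤ/f; (3) for all ξ ∈ ℤ/f one has w_ξ(i) = i and λ_ξ(i) = 0. -/
noncomputable section
namespace Pap

/-- `u^m` as a Laurent series. -/
def U (R : Type*) [CommRing R] (m : ℤ) : LaurentSeries R := HahnSeries.single m 1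

/-- The permutation matrix `A_w`. -/
def permMatrix (R : Type*) [CommRing R] {n : ℕ} (w : Equiv.Perm (Fin n)) :
    Matrix (Fin n) (Fin n) (LaurentSeries R) :=
  Matrix.of fun i j => if i = w j then 1 else 0

/-- The matrix `A_w · u^λ ∈ GL_n(R((u)))`. -/
def xMat (R : Type*) [CommRing R] {n : ℕ} (w : Equiv.Perm (Fin n)) (lam : Fin n → ℤ) :
    Matrix (Fin n) (Fin n) (LaurentSeries R) :=
  permMatrix R w * Matrix.diagonal fun t => U R (lam t)

end Pap
end

open Pap in
lemma xMat_apply' {n : ℕ} (w : Equiv.Perm (Fin n)) (lam : Fin n → ℤ) (i j : Fin n) :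
    xMat ℚ w lam i j = if i = w j then U ℚ (lam j) else 0 := by
  simp [xMat, permMatrix, Matrix.mul_diagonal]

def Pact {n : ℕ} : List (Equiv.Perm (Fin n) × (Fin n → ℤ)) → Fin n → Fin n
  | [], j => j
  | p :: L, j => p.1 (Pact L j)

def Pwt {n : ℕ} : List (Equiv.Perm (Fin n) × (Fin n → ℤ)) → Fin n → ℤ
  | [], _ => 0
  | p :: L, j => p.2 (Pact L j) + Pwt L j

open Pap in
lemma prod_apply' {n : ℕ} (L : List (Equiv.Perm (Fin n) × (Fin n → ℤ))) (i j : Fin n) :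
    (L.map fun p => xMat ℚ p.1 p.2).prod i j = if i = Pact L j then U ℚ (Pwt L j) else 0 := by
  induction L generalizing i with
  | nil => simp [Pact, Pwt, U, Matrix.one_apply]; rfl
  | cons p L ih =>
    simp only [List.map_cons, List.prod_cons, Matrix.mul_apply, ih, xMat_apply']
    simp [Pact, Pwt, U, HahnSeries.single_mul_single]; rfl

lemma Pwt_nonneg {n : ℕ} (L : List (Equiv.Perm (Fin n) × (Fin n → ℤ)))
    (h : ∀ p ∈ L, ∀ i, 0 ≤ p.2 i ∧ (p.2 i = 0 → p.1 i ≤ i)) (j : Fin n) : 0 ≤ Pwt L j := by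
  induction L with
  | nil => simp [Pwt]
  | cons p L ih =>
    have h1 := ih fun q hq => h q (List.mem_cons_of_mem _ hq)
    have h2 := (h p List.mem_cons_self (Pact L j)).1
    simp only [Pwt]; omega

lemma Pwt_zero {n : ℕ} (L : List (Equiv.Perm (Fin n) × (Fin n → ℤ)))
    (h : ∀ p ∈ L, ∀ i, 0 ≤ p.2 i ∧ (p.2 i = 0 → p.1 i ≤ i)) (j : Fin n) (h0 : Pwt L j = 0) :
    Pact L j ≤ j ∧ (Pact L j = j → ∀ p ∈ L, p.1 j = j ∧ p.2 j = 0) := by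
  induction L with
  | nil => simp [Pact]
  | cons p L ih =>
    have hL : ∀ q ∈ L, ∀ i, 0 ≤ q.2 i ∧ (q.2 i = 0 → q.1 i ≤ i) :=
      fun q hq => h q (List.mem_cons_of_mem _ hq)
    have h1 := Pwt_nonneg L hL j
    obtain ⟨h2, h3⟩ := h p List.mem_cons_self (Pact L j)
    simp only [Pwt] at h0
    have hp : p.2 (Pact L j) = 0 := by omega
    obtain ⟨h4, h5⟩ := ih hL (by omega)
    have h6 := h3 hp
    simp only [Pact]
    refine ⟨h6.trans h4, fun he => ?_⟩
    have h7 : Pact L j = j := le_antisymm h4 (he.symm.le.trans h6)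
    rw [h7] at he hp
    intro q hq
    rcases List.mem_cons.1 hq with rfl | hq
    · exact ⟨he, hp⟩
    · exact h5 h7 q hq

lemma Pwt_fix {n : ℕ} (L : List (Equiv.Perm (Fin n) × (Fin n → ℤ))) (j : Fin n)
    (h : ∀ p ∈ L, p.1 j = j ∧ p.2 j = 0) : Pact L j = j ∧ Pwt L j = 0 := by
  induction L with
  | nil => simp [Pact, Pwt]
  | cons p L ih =>
    obtain ⟨h1, h2⟩ := ih fun q hq => h q (List.mem_cons_of_mem _ hq)
    obtain ⟨h3, h4⟩ := h p List.mem_cons_self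
    simp [Pact, Pwt, h1, h2, h3, h4]

open Pap in
theorem stmt3 (n f N : ℕ) (hn : 1 ≤ n) (hf : 1 ≤ f) (hN : 1 ≤ N)
    (w : ZMod f → Equiv.Perm (Fin n)) (lam : ZMod f → Fin n → ℤ)
    (hcond : ∀ (ξ : ZMod f) (i : Fin n), 0 ≤ lam ξ i ∧ (lam ξ i = 0 → w ξ i ≤ i))
    (μ : ZMod f → Fin n → ℤ)
    (hprod : ∀ ξ : ZMod f,
      (((List.range (N * f)).map fun k =>
          xMat ℚ (w (ξ - (k : ZMod f))) (lam (ξ - (k : ZMod f)))).prod)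
        = Matrix.diagonal fun t => U ℚ (μ ξ t)) :
    ∀ i : Fin n,
      ((∃ ξ : ZMod f, (μ ξ i : ℚ) / (N * f) = 0) ↔
        (∀ ξ : ZMod f, (μ ξ i : ℚ) / (N * f) = 0)) ∧
      ((∀ ξ : ZMod f, (μ ξ i : ℚ) / (N * f) = 0) ↔
        (∀ ξ : ZMod f, w ξ i = i ∧ lam ξ i = 0)) := by
  intro i
  have : NeZero f := ⟨by omega⟩
  have key : ∀ ξ, ∃ L : List (Equiv.Perm (Fin n) × (Fin n → ℤ)),
      (∀ p ∈ L, ∃ η, p = (w η, lam η)) ∧ (∀ η, (w η, lam η) ∈ L) ∧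
      Pact L i = i ∧ Pwt L i = μ ξ i := by
    intro ξ
    refine ⟨(List.range (N * f)).map fun k : ℕ => (w (ξ - (k : ZMod f)), lam (ξ - (k : ZMod f))),
      ?_, ?_, ?_⟩
    · intro p hp
      obtain ⟨k, _, rfl⟩ := List.mem_map.1 hp
      exact ⟨_, rfl⟩
    · intro η
      refine List.mem_map.2 ⟨(ξ - η).val, List.mem_range.2 ?_, ?_⟩
      · exact (ZMod.val_lt _).trans_le (Nat.le_mul_of_pos_left _ hN)
      · simp
    · have h := congrFun (congrFun (hprod ξ) i) i
      have hl : (List.range (N * f) >>= fun a => pure (a : ZMod f)) =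
          (List.range (N * f)).map fun k : ℕ => (k : ZMod f) := by
        simp [List.map_eq_flatMap]
      rw [hl, List.map_map] at h
      have h' := prod_apply' ((List.range (N * f)).map fun k : ℕ =>
        (w (ξ - (k : ZMod f)), lam (ξ - (k : ZMod f)))) i i
      rw [List.map_map] at h'
      have h2 := h'.symm.trans h
      rw [Matrix.diagonal_apply_eq] at h2
      split_ifs at h2 with hc
      · refine ⟨hc.symm, ?_⟩
        have h3 := congrArg HahnSeries.order h2
        simpa [U, HahnSeries.order_single] using h3
      · exact absurd h2.symm (by simp [U])
  have hz : ∀ ξ, (μ ξ i : ℚ) / (N * f) = 0 ↔ μ ξ i = 0 := by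
    intro ξ
    have h1 : (N : ℚ) ≠ 0 := by positivity
    have h2 : (f : ℚ) ≠ 0 := by positivity
    simp [h1, h2]
  simp only [hz]
  have a : (∃ ξ, μ ξ i = 0) → ∀ ξ, w ξ i = i ∧ lam ξ i = 0 := by
    rintro ⟨ξ, h0⟩ η
    obtain ⟨L, h1, h2, h3, h4⟩ := key ξ
    refine (Pwt_zero L ?_ i (h4.trans h0)).2 h3 _ (h2 η)
    intro p hp
    obtain ⟨ζ, rfl⟩ := h1 p hp
    exact hcond ζ
  have b : (∀ ξ, w ξ i = i ∧ lam ξ i = 0) → ∀ ξ, μ ξ i = 0 := by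
    intro h ξ
    obtain ⟨L, h1, h2, h3, h4⟩ := key ξ
    rw [← h4]
    refine (Pwt_fix L i ?_).2
    intro p hp
    obtain ⟨ζ, rfl⟩ := h1 p hp
    exact h ζ
  exact ⟨⟨fun h => b (a h), fun h => ⟨0, h 0⟩⟩, ⟨fun h => a ⟨0, h 0⟩, b⟩⟩
end

section
/- Let R be a nonzero commutative ring whose only idempotents are 0 and 1 (equivalently, Spec R is connected), and let a ∈ R((u)) be a unit. Then there exist integers n ≤ n₀ such that the coefficients a_i of a satisfy: a_i = 0 for i < n, a_i is nilpotent for n ≤ i < n₀, and a_{n₀} is a unit of R. Moreover, for an arbitrary commutative ring R and a unit a ∈ R((u))^×, such integers and elements exist Zariski-locally on R, i.e., there exist f₁,…,f_m ∈ R generating the unit ideal such that the image of a in each R_{f_j}((u)) admits such data. -/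
noncomputable section
namespace Pap

variable (R : Type*) [CommRing R]

/-- Coefficientwise map of Laurent series along a ring map. -/
def lsMap {S : Type*} [CommRing S] (f : R →+* S) (x : LaurentSeries R) : LaurentSeries S where
  coeff g := f (x.coeff g)
  isPWO_support' := x.isPWO_support'.mono (fun g hg => by
    simp only [Function.mem_support] at hg ⊢
    intro h; exact hg (by rw [h, map_zero]))

end Pap
end

namespace Pap

open PrimeSpectrum

lemma key_loc (R : Type*) [CommRing R] (a b : LaurentSeries R) (hab : a * b = 1)
    (p : Ideal R) [p.IsPrime] :
    ∃ v : ℤ, a.coeff v ∉ p ∧ b.coeff (-v) ∉ p ∧ (∀ j < v, a.coeff j ∈ p) ∧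
      (∀ j < -v, b.coeff j ∈ p) := by
  let f := Ideal.Quotient.mk p
  let a' : LaurentSeries (R ⧸ p) := HahnSeries.map a f
  let b' : LaurentSeries (R ⧸ p) := HahnSeries.map b f
  have h : a' * b' = 1 := by
    have h1 := HahnSeries.map_mul (f : R →ₙ+* (R ⧸ p)) (x := a) (y := b)
    have h2 : HahnSeries.map (a * b) f = 1 := by
      rw [hab]; exact HahnSeries.map_one f.toMonoidWithZeroHom
    exact h1.symm.trans h2
  have ha : a' ≠ 0 := left_ne_zero_of_mul_eq_one h
  have hb : b' ≠ 0 := right_ne_zero_of_mul_eq_one h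
  have ho := HahnSeries.order_mul ha hb
  rw [h, HahnSeries.order_one] at ho
  have ho' : b'.order = -a'.order := by omega
  refine ⟨a'.order, ?_, ?_, ?_, ?_⟩
  · intro hm
    exact HahnSeries.coeff_order_eq_zero.not.2 ha (Ideal.Quotient.eq_zero_iff_mem.2 hm)
  · intro hm
    rw [← ho'] at hm
    exact HahnSeries.coeff_order_eq_zero.not.2 hb (Ideal.Quotient.eq_zero_iff_mem.2 hm)
  · intro j hj
    exact Ideal.Quotient.eq_zero_iff_mem.1 (HahnSeries.coeff_eq_zero_of_lt_order (x := a') hj)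
  · intro j hj
    rw [← ho'] at hj
    exact Ideal.Quotient.eq_zero_iff_mem.1 (HahnSeries.coeff_eq_zero_of_lt_order (x := b') hj)

lemma core (R : Type*) [CommRing R] (a b : LaurentSeries R) (hab : a * b = 1) :
    ∃ (m : ℕ) (e : Fin m → R) (v : Fin m → ℤ), Ideal.span (Set.range e) = ⊤ ∧
      ∀ j, IsIdempotentElem (e j) ∧ (∀ i < v j, IsNilpotent (e j * a.coeff i)) ∧
        a.coeff (v j) ∣ e j := by
  choose ν h1 h2 h3 h4 using fun p : PrimeSpectrum R => key_loc R a b hab p.asIdeal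
  have hlo : ∀ p, a.order ≤ ν p := fun p => by
    by_contra! hc
    exact h1 p (by rw [HahnSeries.coeff_eq_zero_of_lt_order hc]; exact zero_mem _)
  have hhi : ∀ p, ν p ≤ -b.order := fun p => by
    by_contra! hc
    exact h2 p (by rw [HahnSeries.coeff_eq_zero_of_lt_order (by omega)]; exact zero_mem _)
  have hU : ∀ i : ℤ, {p | ν p = i} =
      zeroLocus ({x | ∃ j < i, a.coeff j = x} ∪ {x | ∃ j < -i, b.coeff j = x}) := by
    intro i
    ext p
    simp only [Set.mem_ofPred_eq, mem_zeroLocus, Set.union_subset_iff]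
    constructor
    · rintro rfl
      exact ⟨by rintro _ ⟨j, hj, rfl⟩; exact h3 p j hj, by rintro _ ⟨j, hj, rfl⟩; exact h4 p j hj⟩
    · rintro ⟨ha, hb⟩
      apply le_antisymm
      · by_contra! hc
        exact h2 p (hb ⟨-ν p, by omega, rfl⟩)
      · by_contra! hc
        exact h1 p (ha ⟨ν p, by omega, rfl⟩)
  have hcl : ∀ i : ℤ, IsClosed {p | ν p = i} := fun i => by
    rw [hU]; exact isClosed_zeroLocus _
  have hclopen : ∀ i : ℤ, IsClopen {p | ν p = i} := fun i => by
    refine ⟨hcl i, ?_⟩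
    rw [← isClosed_compl_iff]
    have : {p | ν p = i}ᶜ = ⋃ k ∈ (Finset.Icc a.order (-b.order)).erase i, {p | ν p = k} := by
      ext p
      simp [hlo p, hhi p]
    rw [this]
    exact isClosed_biUnion_finset fun k _ => hcl k
  choose e he hbo using fun i => PrimeSpectrum.isClopen_iff.1 (hclopen i)
  have hmem : ∀ i p, ν p = i ↔ e i ∉ p.asIdeal := fun i p => by
    have := Set.ext_iff.1 (hbo i) p
    simpa using this
  let s := Finset.Icc a.order (-b.order)
  refine ⟨s.card, fun j => e (s.equivFin.symm j), fun j => s.equivFin.symm j, ?_, ?_⟩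
  · by_contra hne
    obtain ⟨M, hM, hle⟩ := Ideal.exists_le_maximal _ hne
    let p : PrimeSpectrum R := ⟨M, hM.isPrime⟩
    refine (hmem (ν p) p).1 rfl (hle (Ideal.subset_span
      ⟨s.equivFin ⟨ν p, Finset.mem_Icc.2 ⟨hlo p, hhi p⟩⟩, ?_⟩))
    simp
  · intro j
    beta_reduce
    generalize ((s.equivFin.symm j : s) : ℤ) = k
    refine ⟨he k, fun i hi => ?_, ?_⟩
    · rw [nilpotent_iff_mem_prime]
      intro J hJ
      by_cases hk : e k ∈ J
      · exact J.mul_mem_right _ hk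
      · have := (hmem k ⟨J, hJ⟩).2 hk
        exact J.mul_mem_left _ (h3 ⟨J, hJ⟩ i (by omega))
    · have : e k ∈ (Ideal.span {a.coeff k}).radical := by
        rw [Ideal.radical_eq_sInf, Ideal.mem_sInf]
        rintro J ⟨hle, hJ⟩
        by_contra hk
        have h := (hmem k ⟨J, hJ⟩).2 hk
        apply h1 ⟨J, hJ⟩
        rw [h]
        exact hle (Ideal.mem_span_singleton_self _)
      obtain ⟨n, hn⟩ := this
      have hn' : e k ^ (n + 1) ∈ Ideal.span {a.coeff k} := by
        rw [pow_succ]; exact Ideal.mul_mem_right _ _ hn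
      rw [(he k).pow_succ_eq] at hn'
      exact Ideal.mem_span_singleton.1 hn'

end Pap

open Pap in
/-- Structure of the units of `R((u))`: over a connected base the coefficients consist of
zeros, then nilpotents, then a unit; over a general base such data exist Zariski-locally. -/
theorem stmt7 (R : Type*) [CommRing R] (a : LaurentSeries R) (ha : IsUnit a) :
    ((Nontrivial R ∧ ∀ e : R, IsIdempotentElem e → e = 0 ∨ e = 1) →
      ∃ n n₀ : ℤ, n ≤ n₀ ∧ (∀ i, i < n → a.coeff i = 0) ∧
        (∀ i, n ≤ i → i < n₀ → IsNilpotent (a.coeff i)) ∧ IsUnit (a.coeff n₀)) ∧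
    (∃ (m : ℕ) (fs : Fin m → R), Ideal.span (Set.range fs) = ⊤ ∧
      ∀ j : Fin m, ∃ n n₀ : ℤ, n ≤ n₀ ∧
        (∀ i, i < n → (lsMap R (algebraMap R (Localization.Away (fs j))) a).coeff i = 0) ∧
        (∀ i, n ≤ i → i < n₀ →
          IsNilpotent ((lsMap R (algebraMap R (Localization.Away (fs j))) a).coeff i)) ∧
        IsUnit ((lsMap R (algebraMap R (Localization.Away (fs j))) a).coeff n₀)) := by
  obtain ⟨b, hab⟩ := ha.exists_right_inv
  obtain ⟨m, e, v, hs, h⟩ := core R a b hab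
  constructor
  · rintro ⟨hnt, hid⟩
    have : ∃ j, e j = 1 := by
      by_contra! hc
      have h0 : ∀ j, e j = 0 := fun j => (hid _ (h j).1).resolve_right (hc j)
      have : Ideal.span (Set.range e) = ⊥ := by
        rw [Ideal.span_eq_bot]
        rintro _ ⟨j, rfl⟩
        exact h0 j
      exact bot_ne_top (this.symm.trans hs)
    obtain ⟨j, hj⟩ := this
    obtain ⟨-, hn, hd⟩ := h j
    rw [hj] at hn hd
    refine ⟨min a.order (v j), v j, min_le_right _ _, fun i hi => ?_, fun i _ hi => ?_,
      isUnit_of_dvd_one hd⟩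
    · exact HahnSeries.coeff_eq_zero_of_lt_order (lt_of_lt_of_le hi (min_le_left _ _))
    · simpa using hn i hi
  · refine ⟨m, e, hs, fun j => ?_⟩
    obtain ⟨-, hn, hd⟩ := h j
    have hu : IsUnit (algebraMap R (Localization.Away (e j)) (e j)) :=
      IsLocalization.Away.algebraMap_isUnit (e j)
    refine ⟨min a.order (v j), v j, min_le_right _ _, fun i hi => ?_, fun i _ hi => ?_,
      isUnit_of_dvd_unit (map_dvd _ hd) hu⟩
    · change algebraMap R (Localization.Away (e j)) (a.coeff i) = 0
      rw [HahnSeries.coeff_eq_zero_of_lt_order (lt_of_lt_of_le hi (min_le_left _ _)), map_zero]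
    · change IsNilpotent (algebraMap R (Localization.Away (e j)) (a.coeff i))
      obtain ⟨k, hk⟩ := (hn i hi).map (algebraMap R (Localization.Away (e j)))
      rw [map_mul, mul_pow] at hk
      exact ⟨k, (hu.pow k).mul_right_eq_zero.1 hk⟩
end

section
/- Let n ≥ 1, 0 ≤ r ≤ n, and let w ∈ W_{n,r}. Define λ ∈ {0,1}^n by λ(i) = 0 if w^{-1}(i) > i and λ(i) = 1 if w^{-1}(i) < i. Then Σ over pairs 1 ≤ i < j ≤ n with w^{-1}(i) < w^{-1}(j) of |λ(i) − λ(j)|, plus Σ over pairs 1 ≤ i < j ≤ n with w^{-1}(i) > w^{-1}(j) of |λ(i) − λ(j) + 1|, equals N_w. (The left-hand side is the Iwahori–Matsumoto length ℓ(u^λ·w) of the element u^λ·w of the extended affine Weyl group S_n ⋉ ℤ^n of GL_n.) -/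
namespace Pap

variable (n : ℕ)

/-- `σ` has no fixed points and exactly `r` indices with `σ(i) < i`. -/
def Wnr (r : ℕ) (σ : Equiv.Perm (Fin n)) : Prop :=
  (∀ i, σ i ≠ i) ∧ (Finset.univ.filter fun i : Fin n => σ i < i).card = r

/-- `a_σ = |{(i,j) : i < j < σ(j) < σ(i)}|`. -/
def aP (σ : Equiv.Perm (Fin n)) : ℕ :=
  (Finset.univ.filter fun p : Fin n × Fin n =>
    p.1 < p.2 ∧ p.2 < σ p.2 ∧ σ p.2 < σ p.1).card

/-- `ã_σ = |{(i,j) : σ(j) < σ(i) < i < j}|`. -/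
def atP (σ : Equiv.Perm (Fin n)) : ℕ :=
  (Finset.univ.filter fun p : Fin n × Fin n =>
    σ p.2 < σ p.1 ∧ σ p.1 < p.1 ∧ p.1 < p.2).card

/-- `b_σ = |{(i,j) : σ(i) < i < j < σ(j)}|`. -/
def bP (σ : Equiv.Perm (Fin n)) : ℕ :=
  (Finset.univ.filter fun p : Fin n × Fin n =>
    σ p.1 < p.1 ∧ p.1 < p.2 ∧ p.2 < σ p.2).card

/-- `b̃_σ = |{(i,j) : i < σ(i) < σ(j) < j}|`. -/
def btP (σ : Equiv.Perm (Fin n)) : ℕ :=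
  (Finset.univ.filter fun p : Fin n × Fin n =>
    p.1 < σ p.1 ∧ σ p.1 < σ p.2 ∧ σ p.2 < p.2).card

/-- `N_σ`. -/
def NP (σ : Equiv.Perm (Fin n)) : ℕ := aP n σ + atP n σ + bP n σ + btP n σ

/-- The translation part `λ(w)`. -/
def lamOf (w : Equiv.Perm (Fin n)) : Fin n → ℤ := fun i => if i < w⁻¹ i then 0 else 1

end Pap

theorem stmt14 (n r : ℕ) (hn : 1 ≤ n) (hr : r ≤ n) (w : Equiv.Perm (Fin n))
    (hw : Pap.Wnr n r w) :
    (∑ p ∈ Finset.univ.filter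
        (fun p : Fin n × Fin n => p.1 < p.2 ∧ w⁻¹ p.1 < w⁻¹ p.2),
        |Pap.lamOf n w p.1 - Pap.lamOf n w p.2|)
      + (∑ p ∈ Finset.univ.filter
        (fun p : Fin n × Fin n => p.1 < p.2 ∧ w⁻¹ p.2 < w⁻¹ p.1),
        |Pap.lamOf n w p.1 - Pap.lamOf n w p.2 + 1|) = (Pap.NP n w : ℤ) := by
  have hne := hw.1
  have e1 : Pap.aP n w = (Finset.univ.filter fun p : Fin n × Fin n =>
      p.2 < p.1 ∧ p.1 < w p.1 ∧ w p.1 < w p.2).card := by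
    unfold Pap.aP
    exact Finset.card_equiv (Equiv.prodComm _ _) (by simp)
  have e2 : Pap.atP n w = (Finset.univ.filter fun p : Fin n × Fin n =>
      w p.1 < w p.2 ∧ w p.2 < p.2 ∧ p.2 < p.1).card := by
    unfold Pap.atP
    exact Finset.card_equiv (Equiv.prodComm _ _) (by simp)
  unfold Pap.NP
  rw [e1, e2]
  unfold Pap.bP Pap.btP
  simp only [Finset.card_filter, Finset.sum_filter]
  push_cast
  rw [← Finset.sum_add_distrib, ← Finset.sum_add_distrib, ← Finset.sum_add_distrib,
    ← Finset.sum_add_distrib, ← Equiv.sum_comp (Equiv.prodCongr w w)]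
  refine Finset.sum_congr rfl ?_
  rintro ⟨x, y⟩ -
  have hx := hne x
  have hy := hne y
  have hxy : x = y → w x = w y := fun h => by rw [h]
  have ix : w⁻¹ (w x) = x := w.symm_apply_apply x
  have iy : w⁻¹ (w y) = y := w.symm_apply_apply y
  simp only [Equiv.prodCongr_apply, Prod.map_apply, ix, iy, Pap.lamOf]
  clear ix iy
  generalize w x = a at *
  generalize w y = b at *
  rcases lt_or_gt_of_ne hx with h1 | h1 <;> rcases lt_or_gt_of_ne hy with h2 | h2 <;>
    simp only [h1, h2, h1.not_gt, h2.not_gt, if_true, if_false, true_and, false_and, and_false,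
      and_true] <;> norm_num <;> split_ifs <;> first | rfl | omega
end

section
/- Let n ≥ 1 and 1 ≤ r ≤ n−1. Then for every σ ∈ W_{n,r} one has N_σ ≤ N_{n,r}, where N_{n,r} = min((r−1)·(n−r), r·(n−r−1)). -/
open Classical in
/-- number of pairs satisfying `P` -/
noncomputable def DD {n : ℕ} (P : Fin n → Fin n → Prop) : ℕ :=
  ∑ i, ∑ j, if P i j then 1 else 0

lemma DD_card {n : ℕ} (P : Fin n → Fin n → Prop) [DecidablePred fun p : Fin n × Fin n => P p.1 p.2] :
    (Finset.univ.filter fun p : Fin n × Fin n => P p.1 p.2).card = DD P := by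
  classical
  rw [DD, Finset.card_filter, Fintype.sum_prod_type]
  exact Finset.sum_congr rfl fun i _ => Finset.sum_congr rfl fun j _ => by congr

lemma DD_swap {n : ℕ} (P : Fin n → Fin n → Prop) : DD P = DD fun i j => P j i := by
  rw [DD, DD, Finset.sum_comm]

lemma DD_add_le {n : ℕ} (P Q R : Fin n → Fin n → Prop) (h1 : ∀ i j, P i j → R i j)
    (h2 : ∀ i j, Q i j → R i j) (h3 : ∀ i j, P i j → Q i j → False) :
    DD P + DD Q ≤ DD R := by
  classical
  rw [DD, DD, DD, ← Finset.sum_add_distrib]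
  refine Finset.sum_le_sum fun i _ => ?_
  rw [← Finset.sum_add_distrib]
  refine Finset.sum_le_sum fun j _ => ?_
  have := h1 i j
  have := h2 i j
  have := h3 i j
  by_cases P i j <;> by_cases Q i j <;> by_cases R i j <;> simp_all

lemma DD_le {n : ℕ} (P R : Fin n → Fin n → Prop) (h1 : ∀ i j, P i j → R i j) :
    DD P ≤ DD R := by
  have := DD_add_le P (fun _ _ => False) R h1 (fun _ _ h => h.elim) (fun _ _ _ h => h)
  omega

lemma DD_diag {n : ℕ} (Q : Fin n → Prop) [DecidablePred Q] :
    DD (fun i j => i = j ∧ Q i) = (Finset.univ.filter Q).card := by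
  classical
  rw [DD, Finset.card_filter]
  refine Finset.sum_congr rfl fun i _ => ?_
  by_cases h : Q i <;> simp [h]

lemma DD_prod {n : ℕ} (Q R : Fin n → Prop) [DecidablePred Q] [DecidablePred R] :
    DD (fun i j => Q i ∧ R j) = (Finset.univ.filter Q).card * (Finset.univ.filter R).card := by
  classical
  rw [DD, Finset.card_filter, Finset.card_filter, Finset.sum_mul_sum]
  refine Finset.sum_congr rfl fun i _ => Finset.sum_congr rfl fun j _ => ?_
  by_cases h : Q i <;> by_cases h' : R j <;> simp [h, h']

lemma DD_flow {n : ℕ} (σ : Equiv.Perm (Fin n)) (Q : Fin n → Prop) (p : Fin n → Fin n → Prop) :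
    DD (fun k x => Q k ∧ p k x ∧ ¬ p k (σ x)) = DD (fun k x => Q k ∧ p k (σ x) ∧ ¬ p k x) := by
  classical
  rw [DD, DD]
  refine Finset.sum_congr rfl fun k _ => ?_
  by_cases hk : Q k
  swap
  · simp [hk]
  have e := Equiv.sum_comp σ (fun x => if p k x then 1 else 0)
  have : ∑ x, ((if Q k ∧ p k x ∧ ¬ p k (σ x) then 1 else 0) + if p k (σ x) then 1 else 0)
    = ∑ x, ((if Q k ∧ p k (σ x) ∧ ¬ p k x then 1 else 0) + if p k x then 1 else 0) := by
    refine Finset.sum_congr rfl fun x _ => ?_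
    by_cases h : p k x <;> by_cases h' : p k (σ x) <;> simp [h, h', hk]
  rw [Finset.sum_add_distrib, Finset.sum_add_distrib, e] at this
  have := Nat.add_right_cancel this
  convert this

theorem stmt15 (n r : ℕ) (hn : 1 ≤ n) (hr1 : 1 ≤ r) (hr2 : r ≤ n - 1)
    (σ : Equiv.Perm (Fin n)) (hσ : Pap.Wnr n r σ) :
    Pap.NP n σ ≤ min ((r - 1) * (n - r)) (r * (n - r - 1)) := by
  classical
  obtain ⟨hf, hc⟩ := hσ
  have hs : (Finset.univ.filter fun j : Fin n => j < σ j).card = n - r := by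
    have h := Finset.card_filter_add_card_filter_not (s := (Finset.univ : Finset (Fin n)))
      (fun i : Fin n => σ i < i)
    have h2 : (Finset.univ.filter fun j : Fin n => ¬ σ j < j)
        = Finset.univ.filter fun j : Fin n => j < σ j := by
      ext j
      have := hf j
      simp only [Finset.mem_filter, Finset.mem_univ, true_and]
      grind
    rw [h2, hc, Finset.card_univ, Fintype.card_fin] at h
    omega
  have hinj : ∀ i j, σ i = σ j → i = j := fun i j h => σ.injective h
  have ea : Pap.aP n σ = DD fun i j => i < j ∧ j < σ j ∧ σ j < σ i := by
    rw [← DD_card]; rfl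
  have eat : Pap.atP n σ = DD fun i j => σ j < σ i ∧ σ i < i ∧ i < j := by
    rw [← DD_card]; rfl
  have eb : Pap.bP n σ = DD fun i j => σ i < i ∧ i < j ∧ j < σ j := by
    rw [← DD_card]; rfl
  have ebt : Pap.btP n σ = DD fun j i => j < σ j ∧ σ j < σ i ∧ σ i < i := by
    rw [← DD_card]; rfl
  rw [DD_swap] at ea ebt
  -- intersecting pairs
  have hM : Pap.bP n σ + Pap.btP n σ + DD (fun i j => σ i < i ∧ j < σ j ∧ j < i ∧ σ i < σ j)
      ≤ r * (n - r) := by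
    rw [← hs, ← hc, ← DD_prod, eb, ebt]
    refine le_trans (Nat.add_le_add_right (DD_add_le _ _
      (fun i j => σ i < i ∧ j < σ j ∧ ¬ (j < i ∧ σ i < σ j)) ?_ ?_ ?_) _)
      (DD_add_le _ _ _ ?_ ?_ ?_) <;> intro i j <;> grind
  have x1 : (n - r) + Pap.aP n σ ≤ DD fun j i => j < σ j ∧ σ i ≤ j ∧ ¬ i ≤ j := by
    rw [← DD_flow σ (fun j => j < σ j) (fun j i => i ≤ j), ← hs, ← DD_diag, ea]
    refine DD_add_le _ _ _ ?_ ?_ ?_ <;> intro i j <;> grind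
  have x2 : Pap.atP n σ ≤ DD fun i j => σ i < i ∧ j < σ i ∧ ¬ σ j < σ i := by
    rw [DD_flow σ (fun i => σ i < i) (fun i j => j < σ i), eat]
    refine DD_le _ _ ?_ 
    intro i j; grind
  have y1 : Pap.aP n σ ≤ DD fun j i => j < σ j ∧ σ i < j ∧ ¬ i < j := by
    rw [← DD_flow σ (fun j => j < σ j) (fun j i => i < j), ea]
    refine DD_le _ _ ?_ 
    intro i j; grind
  have y2 : r + Pap.atP n σ ≤ DD fun i j => σ i < i ∧ j ≤ σ i ∧ ¬ σ j ≤ σ i := by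
    rw [DD_flow σ (fun i => σ i < i) (fun i j => j ≤ σ i), ← hc, ← DD_diag, eat]
    refine DD_add_le _ _ _ ?_ ?_ ?_ <;> intro i j <;> grind
  rw [DD_swap] at x1 y1
  have x3 := DD_add_le (fun i j => j < σ j ∧ σ i ≤ j ∧ ¬ i ≤ j)
    (fun i j => σ i < i ∧ j < σ i ∧ ¬ σ j < σ i)
    (fun i j => σ i < i ∧ j < σ j ∧ j < i ∧ σ i < σ j)
    (by intro i j; grind) (by intro i j; grind) (by intro i j; grind)
  have y3 := DD_add_le (fun i j => j < σ j ∧ σ i < j ∧ ¬ i < j)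
    (fun i j => σ i < i ∧ j ≤ σ i ∧ ¬ σ j ≤ σ i)
    (fun i j => σ i < i ∧ j < σ j ∧ j < i ∧ σ i < σ j)
    (by intro i j; grind) (by intro i j; grind) (by intro i j; grind)
  rw [Pap.NP, Nat.sub_mul r 1 (n - r), Nat.mul_sub r (n - r) 1, one_mul, mul_one]
  refine le_min ?_ ?_ <;> omega
end

section
/- Let n ≥ 2 and 1 ≤ r ≤ n−1. Then there exists σ ∈ W_{n,r} with N_σ = N_{n,r}; consequently the maximum of N_σ over σ ∈ W_{n,r} equals N_{n,r} = min((r−1)·(n−r), r·(n−r−1)). -/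
namespace Pap

open Finset

theorem card_pairs {n : ℕ} (P : Fin n → Fin n → Prop) [∀ i j, Decidable (P i j)] :
    (Finset.univ.filter fun p : Fin n × Fin n => P p.1 p.2).card
      = ∑ i, ∑ j, if P i j then 1 else 0 := by
  rw [Finset.card_filter, Fintype.sum_prod_type]

theorem balance {n : ℕ} (σ : Equiv.Perm (Fin n)) (x : Fin n) :
    (∑ i, if i < x ∧ x ≤ σ i then 1 else 0) = ∑ i, if σ i < x ∧ x ≤ i then 1 else 0 := by
  have h1 : (∑ i, if i < x then 1 else 0) = ∑ i, if σ i < x then 1 else 0 :=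
    (Equiv.sum_comp σ (fun i => if i < x then 1 else 0)).symm
  have h2 : (∑ i, if i < x then 1 else 0)
      = (∑ i, if i < x ∧ x ≤ σ i then 1 else 0) + ∑ i, if i < x ∧ σ i < x then 1 else 0 := by
    rw [← Finset.sum_add_distrib]
    refine Finset.sum_congr rfl fun i _ => ?_
    split_ifs <;> first | rfl | omega
  have h3 : (∑ i, if σ i < x then 1 else 0)
      = (∑ i, if σ i < x ∧ x ≤ i then 1 else 0) + ∑ i, if i < x ∧ σ i < x then 1 else 0 := by
    rw [← Finset.sum_add_distrib]
    refine Finset.sum_congr rfl fun i _ => ?_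
    split_ifs <;> first | rfl | omega
  omega

/-- crossings -/
def CP (n : ℕ) (σ : Equiv.Perm (Fin n)) : ℕ :=
  (∑ e, ∑ i, if i < e ∧ e < σ i ∧ σ i < σ e then 1 else 0)
  + ∑ d, ∑ i, if σ i < σ d ∧ σ d ≤ i ∧ i < d then 1 else 0

/-- overlaps -/
def OP (n : ℕ) (σ : Equiv.Perm (Fin n)) : ℕ :=
  ∑ e, ∑ d, if e < σ e ∧ σ d < d ∧ σ d ≤ σ e ∧ e ≤ d then 1 else 0

theorem overlap {n : ℕ} (σ : Equiv.Perm (Fin n)) (hf : ∀ i, σ i ≠ i) :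
    OP n σ = aP n σ + atP n σ + CP n σ + ∑ e, if e < σ e then 1 else 0 := by
  have hinj : ∀ i j, σ i = σ j → i = j := fun i j h => σ.injective h
  have hstep1 : OP n σ = (∑ e, ∑ i, if i < e ∧ e < σ e ∧ σ e < σ i then 1 else 0)
      + (∑ e, ∑ i, if i < e ∧ e < σ i ∧ σ i < σ e then 1 else 0)
      + (∑ e, if e < σ e then 1 else 0)
      + (∑ e, ∑ d, if σ d < d ∧ e < σ d ∧ σ d < σ e then 1 else 0) := by
    unfold OP
    rw [← Finset.sum_add_distrib, ← Finset.sum_add_distrib, ← Finset.sum_add_distrib]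
    refine Finset.sum_congr rfl fun e _ => ?_
    by_cases he : e < σ e
    · have A1 : (∑ d, if e < σ e ∧ σ d < d ∧ σ d ≤ σ e ∧ e ≤ d then 1 else 0)
          = (∑ d, if σ d < e ∧ e ≤ d then 1 else 0)
            + ∑ d, if σ d < d ∧ e ≤ σ d ∧ σ d < σ e then 1 else 0 := by
        rw [← Finset.sum_add_distrib]
        refine Finset.sum_congr rfl fun d _ => ?_
        have h1 := hinj d e
        by_cases h2 : σ d = σ e
        · have := h1 h2
          subst this
          split_ifs <;> first | rfl | omega
        · split_ifs <;> first | rfl | omega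
      have A2 : (∑ i, if i < e ∧ e ≤ σ i then 1 else 0)
          = (∑ i, if i < e ∧ e < σ e ∧ σ e < σ i then 1 else 0)
            + (∑ i, if i < e ∧ e < σ i ∧ σ i < σ e then 1 else 0)
            + ∑ i, if i < e ∧ σ i = e then 1 else 0 := by
        simp only [← Finset.sum_add_distrib]
        refine Finset.sum_congr rfl fun d _ => ?_
        have h1 := hinj d e
        by_cases h2 : σ d = σ e
        · have := h1 h2
          subst this
          split_ifs <;> first | rfl | omega
        · split_ifs <;> first | rfl | omega
      have A3 : (∑ d, if σ d < d ∧ e ≤ σ d ∧ σ d < σ e then 1 else 0)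
          = (∑ d, if σ d < d ∧ e < σ d ∧ σ d < σ e then 1 else 0)
            + ∑ d, if e < d ∧ σ d = e then 1 else 0 := by
        simp only [← Finset.sum_add_distrib]
        refine Finset.sum_congr rfl fun d _ => ?_
        split_ifs <;> first | rfl | omega
      have A4 : (∑ i, if i < e ∧ σ i = e then 1 else 0) + (∑ d, if e < d ∧ σ d = e then 1 else 0)
          = 1 := by
        have : (∑ i, if σ i = e then 1 else 0) = 1 := by
          rw [Equiv.sum_comp σ (fun i => if i = e then 1 else 0)]
          simp
        rw [← this, ← Finset.sum_add_distrib]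
        refine Finset.sum_congr rfl fun d _ => ?_
        have := hf d
        split_ifs <;> first | rfl | omega
      have A5 := balance σ e
      rw [if_pos he]
      omega
    · rw [if_neg he]
      simp only [← Finset.sum_add_distrib, add_zero]
      refine Finset.sum_congr rfl fun d _ => ?_
      split_ifs <;> first | rfl | omega
  have hstep2 : (∑ e, ∑ d, if σ d < d ∧ e < σ d ∧ σ d < σ e then 1 else 0)
      = (∑ d, ∑ i, if σ i < σ d ∧ σ d < d ∧ d < i then 1 else 0)
        + ∑ d, ∑ i, if σ i < σ d ∧ σ d ≤ i ∧ i < d then 1 else 0 := by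
    rw [Finset.sum_comm, ← Finset.sum_add_distrib]
    refine Finset.sum_congr rfl fun d _ => ?_
    by_cases hd : σ d < d
    · have B1 : (∑ e, if σ d < d ∧ e < σ d ∧ σ d < σ e then 1 else 0)
          = ∑ e, if e < σ d ∧ σ d ≤ σ e then 1 else 0 := by
        refine Finset.sum_congr rfl fun e _ => ?_
        by_cases h2 : σ d = σ e
        · have := hinj _ _ h2
          subst this
          split_ifs <;> first | rfl | omega
        · split_ifs <;> first | rfl | omega
      rw [B1, balance, ← Finset.sum_add_distrib]
      refine Finset.sum_congr rfl fun i _ => ?_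
      by_cases h2 : i = d
      · subst h2
        split_ifs <;> first | rfl | omega
      · split_ifs <;> first | rfl | omega
    · rw [← Finset.sum_add_distrib]
      refine Finset.sum_congr rfl fun i _ => ?_
      split_ifs <;> first | rfl | omega
  have ha : aP n σ = ∑ e, ∑ i, if i < e ∧ e < σ e ∧ σ e < σ i then 1 else 0 := by
    unfold aP
    rw [card_pairs (fun i j => i < j ∧ j < σ j ∧ σ j < σ i), Finset.sum_comm]
  have hat : atP n σ = ∑ d, ∑ i, if σ i < σ d ∧ σ d < d ∧ d < i then 1 else 0 := by
    unfold atP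
    rw [card_pairs (fun i j => σ j < σ i ∧ σ i < i ∧ i < j)]
  unfold CP
  omega

theorem bsum {n : ℕ} (σ : Equiv.Perm (Fin n)) :
    bP n σ + btP n σ + OP n σ
      = (∑ e, if e < σ e then 1 else 0) * ∑ d, if σ d < d then 1 else 0 := by
  have hb : bP n σ = ∑ e, ∑ d, if σ d < d ∧ d < e ∧ e < σ e then 1 else 0 := by
    unfold bP
    rw [card_pairs (fun i j => σ i < i ∧ i < j ∧ j < σ j), Finset.sum_comm]
  have hbt : btP n σ = ∑ e, ∑ d, if e < σ e ∧ σ e < σ d ∧ σ d < d then 1 else 0 := by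
    unfold btP
    rw [card_pairs (fun i j => i < σ i ∧ σ i < σ j ∧ σ j < j)]
  rw [hb, hbt, OP, Finset.sum_mul_sum]
  simp only [← Finset.sum_add_distrib]
  refine Finset.sum_congr rfl fun e _ => Finset.sum_congr rfl fun d _ => ?_
  split_ifs <;> first | rfl | omega

theorem key {n r : ℕ} (σ : Equiv.Perm (Fin n)) (h : Wnr n r σ) :
    (∑ e, if e < σ e then 1 else 0) = n - r ∧ r ≤ n ∧
    NP n σ + CP n σ + (n - r) = (n - r) * r := by
  obtain ⟨hf, hr⟩ := h
  rw [Finset.card_filter] at hr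
  have hs : (∑ e, if e < σ e then 1 else 0) + (∑ d, if σ d < d then 1 else 0) = n := by
    rw [← Finset.sum_add_distrib]
    have : ∀ i ∈ (Finset.univ : Finset (Fin n)),
        ((if i < σ i then 1 else 0) + (if σ i < i then 1 else 0)) = 1 := by
      intro i _
      have := hf i
      split_ifs <;> first | rfl | omega
    rw [Finset.sum_congr rfl this]
    simp
  have h1 := overlap σ hf
  have h2 := bsum σ
  have h3 : (∑ e, if e < σ e then 1 else 0) = n - r := by omega
  rw [hr, h3] at h2
  rw [h3] at h1
  refine ⟨h3, by omega, ?_⟩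
  unfold NP
  omega

theorem key' {n r : ℕ} (σ : Equiv.Perm (Fin n)) (h : Wnr n r σ) :
    NP n σ + CP n σ = (r - 1) * (n - r) := by
  obtain ⟨-, -, h⟩ := key σ h
  rw [Nat.sub_mul, one_mul, mul_comm r]
  omega

theorem NP_inv {n : ℕ} (σ : Equiv.Perm (Fin n)) : NP n σ⁻¹ = NP n σ := by
  have e2 : ∀ P : Fin n → Fin n → ℕ, (∑ i, ∑ j, P i j) = ∑ i, ∑ j, P (σ i) (σ j) := by
    intro P
    rw [← Equiv.sum_comp σ]
    refine Finset.sum_congr rfl fun i _ => ?_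
    rw [← Equiv.sum_comp σ]
  have ha : aP n σ⁻¹ = atP n σ := by
    unfold aP atP
    rw [card_pairs (fun i j => i < j ∧ j < σ⁻¹ j ∧ σ⁻¹ j < σ⁻¹ i),
      card_pairs (fun i j => σ j < σ i ∧ σ i < i ∧ i < j), e2, Finset.sum_comm]
    simp
  have hat : atP n σ⁻¹ = aP n σ := by
    unfold aP atP
    rw [card_pairs (fun i j => i < j ∧ j < σ j ∧ σ j < σ i),
      card_pairs (fun i j => σ⁻¹ j < σ⁻¹ i ∧ σ⁻¹ i < i ∧ i < j), e2, Finset.sum_comm]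
    simp
  have hb : bP n σ⁻¹ = btP n σ := by
    unfold bP btP
    rw [card_pairs (fun i j => σ⁻¹ i < i ∧ i < j ∧ j < σ⁻¹ j),
      card_pairs (fun i j => i < σ i ∧ σ i < σ j ∧ σ j < j), e2]
    simp
  have hbt : btP n σ⁻¹ = bP n σ := by
    unfold bP btP
    rw [card_pairs (fun i j => σ i < i ∧ i < j ∧ j < σ j),
      card_pairs (fun i j => i < σ⁻¹ i ∧ σ⁻¹ i < σ⁻¹ j ∧ σ⁻¹ j < j), e2]
    simp
  unfold NP
  omega

theorem Wnr_inv {n r : ℕ} (σ : Equiv.Perm (Fin n)) (h : Wnr n r σ) : Wnr n (n - r) σ⁻¹ := by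
  refine ⟨fun i hi => h.1 i ?_, ?_⟩
  · conv_lhs => rw [← hi]
    simp
  · rw [Finset.card_filter, ← (key σ h).1, ← Equiv.sum_comp σ]
    simp

theorem upper {n r : ℕ} (σ : Equiv.Perm (Fin n)) (h : Wnr n r σ) :
    NP n σ ≤ min ((r - 1) * (n - r)) (r * (n - r - 1)) := by
  have h1 := key' σ h
  have h2 := key' _ (Wnr_inv σ h)
  have h3 := (key σ h).2.1
  rw [NP_inv, Nat.sub_sub_self h3, mul_comm] at h2
  exact le_min (by omega) (by omega)

theorem exists_small {n r : ℕ} (hr : 1 ≤ r) (h : 2 * r ≤ n) :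
    ∃ σ : Equiv.Perm (Fin n), Wnr n r σ ∧ NP n σ = (r - 1) * (n - r) := by
  let f : Fin n → Fin n := fun i =>
    if hi : r - 1 ≤ i.1 ∧ i.1 < n - r then ⟨i.1 + 1, by omega⟩ else ⟨n - 1 - i.1, by omega⟩
  have hfv : ∀ i : Fin n, (r - 1 ≤ i.1 ∧ i.1 < n - r ∧ (f i).1 = i.1 + 1) ∨
      (i.1 < r - 1 ∧ (f i).1 = n - 1 - i.1) ∨ (n - r ≤ i.1 ∧ (f i).1 = n - 1 - i.1) := by
    intro i
    by_cases hi : r - 1 ≤ i.1 ∧ i.1 < n - r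
    · left
      refine ⟨hi.1, hi.2, ?_⟩
      simp only [f, dif_pos hi]
    · right
      have hv : (f i).1 = n - 1 - i.1 := by simp only [f, dif_neg hi]
      rw [hv]
      omega
  have hinj : Function.Injective f := by
    intro i j hij
    have h1 := hfv i
    have h2 := hfv j
    rw [hij] at h1
    ext
    omega
  let σ : Equiv.Perm (Fin n) := Equiv.ofBijective f (Finite.injective_iff_bijective.mp hinj)
  have hσ : ∀ i : Fin n, (r - 1 ≤ i.1 ∧ i.1 < n - r ∧ (σ i).1 = i.1 + 1) ∨
      (i.1 < r - 1 ∧ (σ i).1 = n - 1 - i.1) ∨ (n - r ≤ i.1 ∧ (σ i).1 = n - 1 - i.1) := hfv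
  have hW : Wnr n r σ := by
    refine ⟨fun i hi => ?_, ?_⟩
    · have := hσ i
      rw [hi] at this
      omega
    · have : (Finset.univ.filter fun i : Fin n => σ i < i)
          = Finset.univ.filter fun i : Fin n => ¬ i.1 < n - r := by
        ext i
        have := hσ i
        have := i.2
        simp only [Finset.mem_filter, Finset.mem_univ, true_and, Fin.lt_def]
        omega
      rw [this]
      have h1 := Finset.card_filter_add_card_filter_not (s := (Finset.univ : Finset (Fin n)))
        (fun i : Fin n => i.1 < n - r)
      rw [Fin.card_filter_val_lt] at h1
      simp only [Finset.card_univ, Fintype.card_fin] at h1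
      omega
  refine ⟨σ, hW, ?_⟩
  rw [← key' σ hW]
  have hC : CP n σ = 0 := by
    unfold CP
    have h1 : ∀ e i : Fin n, ¬ (i < e ∧ e < σ i ∧ σ i < σ e) := by
      intro e i
      have h1 := hσ e
      have h2 := hσ i
      simp only [Fin.lt_def]
      omega
    have h2 : ∀ d i : Fin n, ¬ (σ i < σ d ∧ σ d ≤ i ∧ i < d) := by
      intro e i
      have h1 := hσ e
      have h2 := hσ i
      simp only [Fin.lt_def, Fin.le_def]
      omega
    simp only [h1, h2, if_false, Finset.sum_const_zero, add_zero]
  omega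

theorem exists_max {n r : ℕ} (hr : 1 ≤ r) (h : r + 1 ≤ n) :
    ∃ σ : Equiv.Perm (Fin n), Wnr n r σ ∧
      NP n σ = min ((r - 1) * (n - r)) (r * (n - r - 1)) := by
  by_cases h2 : 2 * r ≤ n
  · obtain ⟨σ, hW, hN⟩ := exists_small hr h2
    exact ⟨σ, hW, le_antisymm (upper σ hW) (hN ▸ min_le_left _ _)⟩
  · obtain ⟨σ, hW, hN⟩ := exists_small (n := n) (r := n - r) (by omega) (by omega)
    have hW' := Wnr_inv σ hW
    rw [Nat.sub_sub_self (by omega)] at hW' hN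
    refine ⟨σ⁻¹, hW', le_antisymm (upper _ hW') ?_⟩
    rw [NP_inv, hN, mul_comm (n - r - 1)]
    exact min_le_right _ _

end Pap

theorem stmt16 (n r : ℕ) (hn : 2 ≤ n) (hr1 : 1 ≤ r) (hr2 : r ≤ n - 1) :
    (∃ σ : Equiv.Perm (Fin n), Pap.Wnr n r σ ∧
        Pap.NP n σ = min ((r - 1) * (n - r)) (r * (n - r - 1))) ∧
      IsGreatest {k : ℕ | ∃ σ : Equiv.Perm (Fin n), Pap.Wnr n r σ ∧ Pap.NP n σ = k}
        (min ((r - 1) * (n - r)) (r * (n - r - 1))) := by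
  have h := Pap.exists_max (n := n) hr1 (by omega)
  refine ⟨h, h, ?_⟩
  rintro k ⟨σ, hW, rfl⟩
  exact Pap.upper σ hW
end
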